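/- For every integer i ≥ 1, ν₂(S(16i+12, 5)) ≥ 3, ν₂(S(16i+7, 5)) = 2, and ν₂(S(16i+15, 5)) ≥ 3. -/

import Mathlib

/-- Stirling numbers of the second kind, via the recurrence
`S(n+1,k+1) = S(n,k) + (k+1)·S(n,k+1)`. -/
def stirling2 : ℕ → ℕ → ℕ
  | 0, 0 => 1
  | 0, _ + 1 => 0
  | _ + 1, 0 => 0
  | n + 1, k + 1 => stirling2 n k + (k + 1) * stirling2 n (k + 1)

/-- One step of the recurrence modulo 8 on the tuple of columns 1..5. -/
def stepMod8 (s : ℕ × ℕ × ℕ × ℕ × ℕ) : ℕ × ℕ × ℕ × ℕ × ℕ :=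
  (s.1 % 8, (s.1 + 2 * s.2.1) % 8, (s.2.1 + 3 * s.2.2.1) % 8,
    (s.2.2.1 + 4 * s.2.2.2.1) % 8, (s.2.2.2.1 + 5 * s.2.2.2.2) % 8)

/-- Columns 1..5 modulo 8. -/
def stateMod8 (n : ℕ) : ℕ × ℕ × ℕ × ℕ × ℕ :=
  (stirling2 n 1 % 8, stirling2 n 2 % 8, stirling2 n 3 % 8, stirling2 n 4 % 8,
    stirling2 n 5 % 8)

theorem stateMod8_succ (n : ℕ) (hn : 1 ≤ n) : stateMod8 (n + 1) = stepMod8 (stateMod8 n) := by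
  obtain ⟨m, rfl⟩ : ∃ m, n = m + 1 := ⟨n - 1, by omega⟩
  have h1 : stirling2 (m + 1 + 1) 1 = stirling2 (m + 1) 1 := by
    rw [stirling2, stirling2]; simp
  have h2 : stirling2 (m + 1 + 1) 2 = stirling2 (m + 1) 1 + 2 * stirling2 (m + 1) 2 := rfl
  have h3 : stirling2 (m + 1 + 1) 3 = stirling2 (m + 1) 2 + 3 * stirling2 (m + 1) 3 := rfl
  have h4 : stirling2 (m + 1 + 1) 4 = stirling2 (m + 1) 3 + 4 * stirling2 (m + 1) 4 := rfl
  have h5 : stirling2 (m + 1 + 1) 5 = stirling2 (m + 1) 4 + 5 * stirling2 (m + 1) 5 := rfl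
  simp only [stateMod8, stepMod8, h1, h2, h3, h4, h5, Prod.mk.injEq]
  refine ⟨?_, ?_, ?_, ?_, ?_⟩ <;> omega

theorem stateMod8_add (n k : ℕ) (hn : 1 ≤ n) :
    stateMod8 (n + k) = stepMod8^[k] (stateMod8 n) := by
  induction k with
  | zero => rfl
  | succ k ih =>
    rw [Function.iterate_succ_apply', ← ih, ← stateMod8_succ _ (by omega)]; rfl

theorem stateMod8_seven : stateMod8 7 = (1, 7, 5, 6, 4) := by
  simp [stateMod8, stirling2]

theorem stateMod8_period (i : ℕ) : stateMod8 (16 * i + 7) = (1, 7, 5, 6, 4) := by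
  induction i with
  | zero => exact stateMod8_seven
  | succ i ih =>
    rw [show 16 * (i + 1) + 7 = 16 * i + 7 + 16 by ring, stateMod8_add _ _ (by omega), ih]
    decide

theorem stirling2_five_pos (n : ℕ) : 0 < stirling2 (n + 5) 5 := by
  induction n with
  | zero => simp [stirling2]
  | succ n ih =>
    have h : stirling2 (n + 1 + 5) 5 = stirling2 (n + 5) 4 + 5 * stirling2 (n + 5) 5 := by
      rw [show n + 1 + 5 = (n + 5) + 1 by ring]; rfl
    omega

theorem three_le_of_mod (n : ℕ) (hn : 0 < n) (h : n % 8 = 0) : 3 ≤ padicValNat 2 n := by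
  rw [← padicValNat_dvd_iff_le (by omega)]
  exact Nat.dvd_of_mod_eq_zero h

/-- For i ≥ 1, ν₂(S(16i+12,5)) ≥ 3, ν₂(S(16i+7,5)) = 2 and ν₂(S(16i+15,5)) ≥ 3. -/
theorem nu2_stirling_five_16i (i : ℕ) (hi : 1 ≤ i) :
    3 ≤ padicValNat 2 (stirling2 (16 * i + 12) 5) ∧
    padicValNat 2 (stirling2 (16 * i + 7) 5) = 2 ∧
    3 ≤ padicValNat 2 (stirling2 (16 * i + 15) 5) := by
  have h7 := stateMod8_period i
  have h12 := stateMod8_add (16 * i + 7) 5 (by omega)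
  have h15 := stateMod8_add (16 * i + 7) 8 (by omega)
  rw [h7] at h12 h15
  refine ⟨three_le_of_mod _ (stirling2_five_pos (16 * i + 7)) ?_, ?_,
    three_le_of_mod _ (stirling2_five_pos (16 * i + 10)) ?_⟩
  · have := congrArg (fun s => s.2.2.2.2) h12
    exact this.trans (by decide)
  · have h : stirling2 (16 * i + 7) 5 % 8 = 4 := congrArg (fun s => s.2.2.2.2) h7
    have hp := stirling2_five_pos (16 * i + 2)
    have hp' : stirling2 (16 * i + 7) 5 ≠ 0 := by omega
    apply le_antisymm
    · by_contra hc
      have h3 : 3 ≤ padicValNat 2 (stirling2 (16 * i + 7) 5) := by omega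
      rw [← padicValNat_dvd_iff_le hp'] at h3
      omega
    · rw [← padicValNat_dvd_iff_le hp']
      omega
  · have := congrArg (fun s => s.2.2.2.2) h15
    exact this.trans (by decide)
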